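/- For products of odd divided difference operators indexed by reduced words: if w, w' ∈ S_n satisfy ℓ(w) + ℓ(w') = ℓ(ww'), then ∂_w ∂_{w'} = ±∂_{ww'}, and if ℓ(w) + ℓ(w') > ℓ(ww') then ∂_w ∂_{w'} = 0, where ∂_w = ∂_{i_1}⋯∂_{i_r} for a fixed reduced expression w = s_{i_1}⋯s_{i_r}. -/

import Mathlib

/-!
The operators `∂_i` satisfy `∂_i (x_j g) = c_i(j) g - x_{s_i j} ∂_i g`, where `c_i(j)` is `1` if
`j ∈ {i, i+1}` and `0` otherwise. Since left multiplications by generators build all of `SPol_n`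
from `1`, and `∂_i 1 = 0`, the odd nilHecke relations follow by induction on monomials: one only
has to compare the scalars `c_i(j)` along the orbit of `j` (`OddDD.sq_zero`, `OddDD.anticomm`,
`OddDD.braid`).

On the side of the symmetric group, length is the number of inversions: multiplying by `s_i` on the
left changes it by exactly one, according to the order of `w⁻¹(i)` and `w⁻¹(i+1)`, so a word is
reduced iff its length is the number of inversions (`OddDD.isReducedWord_iff`). If two reduced words
of `w` begin with `i ≠ j`, both are left descents of `w`, so `w` also has reduced words starting
with `i j …` and `j i …` (or `i j i …` and `j i j …`) related by one defining relation
(`OddDD.exists_related`). Induction on length gives independence of the reduced word up to sign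
(`OddDD.prod_matsumoto`). If `u` is reduced but `i u` is not, then `i` is a left descent of the
permutation of `u`, so up to sign `∂_u` starts with `∂_i`, and `∂_i² = 0` kills the product; hence
the product along a nonreduced word is zero (`OddDD.prod_eq_zero`). All claims follow by looking
at the concatenation of the two chosen words.
-/

/-! STATEMENT 18: products of odd divided difference operators along reduced words. -/

noncomputable section

/-- The defining relations of the skew polynomial ring: `x_i x_j = -x_j x_i` for `i ≠ j`. -/
inductive SkewRel (k : Type*) [CommRing k] (n : ℕ) :
    FreeAlgebra k (Fin n) → FreeAlgebra k (Fin n) → Prop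
  | skew (i j : Fin n) (h : i ≠ j) :
      SkewRel k n (FreeAlgebra.ι k i * FreeAlgebra.ι k j)
        (-(FreeAlgebra.ι k j * FreeAlgebra.ι k i))

/-- The ring of skew polynomials `SPol_n = k⟨x_1,…,x_n⟩/(x_i x_j + x_j x_i, i ≠ j)`. -/
abbrev SPol (k : Type*) [CommRing k] (n : ℕ) : Type _ := RingQuot (SkewRel k n)

/-- The generators `x_i` of the skew polynomial ring. -/
def SPol.X (k : Type*) [CommRing k] (n : ℕ) (i : Fin n) : SPol k n :=
  RingQuot.mkAlgHom k (SkewRel k n) (FreeAlgebra.ι k i)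

/-- The monomial `x_{l₁} ⋯ x_{l_r}` associated to a word `l` in the generators. -/
def SPol.mon (k : Type*) [CommRing k] (n : ℕ) (l : List (Fin n)) : SPol k n :=
  (l.map (SPol.X k n)).prod

/-- The homogeneous component of `SPol_n` spanned by the monomials in `m` generators;
these are the homogeneous elements of `ℤ`-degree `2m` for the grading with `|x_i| = 2`
(equivalently, of parity `m`). -/
def SPol.homog (k : Type*) [CommRing k] (n : ℕ) (m : ℕ) : Submodule k (SPol k n) :=
  Submodule.span k {f | ∃ l : List (Fin n), l.length = m ∧ f = SPol.mon k n l}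

/-- `D` is the odd divided difference operator for the simple transposition exchanging the
(adjacent) indices `i` and `i'`, where `s` is the algebra endomorphism permuting the
variables accordingly: `D` takes the value `1` on `x_i` and `x_{i'}` and `0` on the other
generators, and satisfies the twisted Leibniz rule
`∂(fg) = ∂(f)g + (-1)^m s(f) ∂(g)` for `f` homogeneous of `ℤ`-degree `2m`. -/
def IsOddDD (k : Type*) [CommRing k] (n : ℕ) (i i' : Fin n)
    (s : SPol k n →ₐ[k] SPol k n) (D : SPol k n →ₗ[k] SPol k n) : Prop :=
  (∀ j : Fin n, s (SPol.X k n j) = SPol.X k n (Equiv.swap i i' j)) ∧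
  (∀ j : Fin n, D (SPol.X k n j) = if j = i ∨ j = i' then 1 else 0) ∧
  (∀ (m : ℕ) (f g : SPol k n), f ∈ SPol.homog k n m →
      D (f * g) = D f * g + ((-1 : ℤ) ^ m) • (s f * D g))

/-- The index set of the simple transpositions `s_i = (i, i+1)`, `1 ≤ i ≤ n-1`. -/
def Idx (n : ℕ) : Type := {p : ℕ // p + 1 < n}

/-- The smaller entry `i` of `s_i` as an element of `Fin n`. -/
def Idx.lo {n : ℕ} (i : Idx n) : Fin n := ⟨i.1, Nat.lt_of_succ_lt i.2⟩

/-- The larger entry `i+1` of `s_i` as an element of `Fin n`. -/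
def Idx.hi {n : ℕ} (i : Idx n) : Fin n := ⟨i.1 + 1, i.2⟩

/-- The permutation `s_{i_1} ⋯ s_{i_r} ∈ S_n` associated to a word `l = (i_1, …, i_r)`. -/
def permOfWord (n : ℕ) (l : List (Idx n)) : Equiv.Perm (Fin n) :=
  (l.map fun i => Equiv.swap i.lo i.hi).prod

/-- A word is reduced if it has minimal length among all words with the same
associated permutation. -/
def IsReducedWord (n : ℕ) (l : List (Idx n)) : Prop :=
  ∀ l' : List (Idx n), permOfWord n l' = permOfWord n l → l.length ≤ l'.length

namespace OddDD

/-! ### Odd nilHecke relations -/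

section Relations

variable {k : Type*} [CommRing k] {n : ℕ}

/-- Linear maps on `SPol_n` agree if they agree at `1` and agreement at `g` implies agreement at
each `x_j g`. -/
theorem end_ext {E F : Module.End k (SPol k n)} (h1 : E 1 = F 1)
    (hX : ∀ j g, E g = F g → E (SPol.X k n j * g) = F (SPol.X k n j * g)) : E = F := by
  have key : ∀ (p : FreeAlgebra k (Fin n)) (g : SPol k n), E g = F g →
      E (RingQuot.mkAlgHom k (SkewRel k n) p * g) =
        F (RingQuot.mkAlgHom k (SkewRel k n) p * g) := by
    intro p
    induction p using FreeAlgebra.induction with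
    | grade0 r =>
      intro g hg
      rw [AlgHom.commutes, ← Algebra.smul_def, map_smul, map_smul, hg]
    | grade1 j => exact fun g hg => hX j g hg
    | mul a b ha hb =>
      intro g hg
      rw [map_mul (RingQuot.mkAlgHom k (SkewRel k n)), mul_assoc]
      exact ha _ (hb _ hg)
    | add a b ha hb =>
      intro g hg
      rw [map_add, add_mul, map_add, map_add, ha _ hg, hb _ hg]
  ext f
  obtain ⟨p, rfl⟩ := RingQuot.mkAlgHom_surjective k (SkewRel k n) f
  simpa using key p 1 h1

/-- The scalar `c_i(j) = ∂_i(x_j)`. -/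
def coef (k : Type*) [CommRing k] {n : ℕ} (i : Idx n) (j : Fin n) : k :=
  if j = i.lo ∨ j = i.hi then 1 else 0

/-- The simple transposition `s_i`. -/
def sw {n : ℕ} (i : Idx n) : Equiv.Perm (Fin n) := Equiv.swap i.lo i.hi

theorem hi_val (i : Idx n) : i.hi.val = i.lo.val + 1 := rfl

theorem lo_ne_hi (i : Idx n) : i.lo ≠ i.hi := by
  rw [ne_eq, Fin.ext_iff, hi_val]
  omega

theorem sw_val (i : Idx n) (a : Fin n) :
    (sw i a).val = if a.val = i.lo.val then i.lo.val + 1 else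
      if a.val = i.lo.val + 1 then i.lo.val else a.val := by
  rw [sw, Equiv.swap_apply_def]
  simp only [Fin.ext_iff, hi_val]
  split_ifs <;> rfl

theorem coef_eq (i : Idx n) (a : Fin n) :
    coef k i a = if a.val = i.lo.val ∨ a.val = i.lo.val + 1 then 1 else 0 := by
  simp only [coef, Fin.ext_iff, hi_val]

variable {s : Idx n → (SPol k n →ₐ[k] SPol k n)} {D : Idx n → Module.End k (SPol k n)}

theorem apply_one (hD : ∀ i : Idx n, IsOddDD k n i.lo i.hi (s i) (D i)) (i : Idx n) :
    D i 1 = 0 := by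
  have h := (hD i).2.2 0 1 1 (Submodule.subset_span ⟨[], rfl, rfl⟩)
  simpa using h

/-- The Leibniz rule with a generator as left factor; together with `∂_i 1 = 0` it
determines `∂_i`. -/
theorem apply_X_mul (hD : ∀ i : Idx n, IsOddDD k n i.lo i.hi (s i) (D i)) (i : Idx n)
    (j : Fin n) (g : SPol k n) :
    D i (SPol.X k n j * g) = coef k i j • g - SPol.X k n (sw i j) * D i g := by
  have h := (hD i).2.2 1 (SPol.X k n j) g
    (Submodule.subset_span ⟨[j], rfl, by simp [SPol.mon]⟩)
  rw [h, (hD i).1, (hD i).2.1, coef, sw]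
  split_ifs <;> simp [sub_eq_add_neg]

theorem coef_sw (i : Idx n) (a : Fin n) : coef k i (sw i a) = coef k i a := by
  rw [coef_eq, coef_eq, sw_val]
  congr 1
  apply propext
  split_ifs <;> omega

theorem sq_zero (hD : ∀ i : Idx n, IsOddDD k n i.lo i.hi (s i) (D i)) (i : Idx n) :
    D i * D i = 0 := by
  refine end_ext (by simp [apply_one hD]) fun a g hg => ?_
  change D i (D i g) = 0 at hg
  change D i (D i (SPol.X k n a * g)) = 0
  rw [apply_X_mul hD, map_sub, map_smul, apply_X_mul hD, hg, coef_sw, mul_zero, sub_zero,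
    sub_self]

theorem coef_sw_far {i j : Idx n}
    (h : i.lo.val + 1 < j.lo.val ∨ j.lo.val + 1 < i.lo.val) (a : Fin n) :
    coef k i (sw j a) = coef k i a := by
  rw [coef_eq, coef_eq, sw_val]
  congr 1
  apply propext
  split_ifs <;> omega

theorem sw_comm {i j : Idx n} (h : i.lo.val + 1 < j.lo.val ∨ j.lo.val + 1 < i.lo.val) :
    sw i * sw j = sw j * sw i := by
  ext a
  simp only [Equiv.Perm.mul_apply, sw_val]
  split_ifs <;> omega

theorem anticomm (hD : ∀ i : Idx n, IsOddDD k n i.lo i.hi (s i) (D i)) {i j : Idx n}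
    (h : i.lo.val + 1 < j.lo.val ∨ j.lo.val + 1 < i.lo.val) : D i * D j = -(D j * D i) := by
  refine end_ext ?_ fun a g hg => ?_
  · change D i (D j 1) = -(D j (D i 1))
    simp [apply_one hD]
  have hs : sw i (sw j a) = sw j (sw i a) := congrArg (fun e => e a) (sw_comm h)
  change D i (D j g) = -(D j (D i g)) at hg
  change D i (D j (SPol.X k n a * g)) = -(D j (D i (SPol.X k n a * g)))
  rw [apply_X_mul hD j, apply_X_mul hD i, map_sub, map_sub, map_smul, map_smul,
    apply_X_mul hD, apply_X_mul hD, coef_sw_far h, coef_sw_far h.symm, hs, hg]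
  have hneg : SPol.X k n (sw j (sw i a)) * -(D j (D i g)) =
    -(SPol.X k n (sw j (sw i a)) * D j (D i g)) :=
    @mul_neg (SPol k n) _ _ (SPol.X k n (sw j (sw i a))) (D j (D i g))
  rw [hneg]
  abel

theorem sw_braid {i j : Idx n} (h : j.lo.val = i.lo.val + 1) :
    sw i * (sw j * sw i) = sw j * (sw i * sw j) := by
  ext a
  simp only [Equiv.Perm.mul_apply, sw_val, h]
  split_ifs <;> omega

/-- For adjacent `i`, `j` the permutation `s_j s_i` carries `{j, j+1}` to `{i, i+1}`. -/
theorem coef_braid {i j : Idx n}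
    (h : j.lo.val = i.lo.val + 1 ∨ i.lo.val = j.lo.val + 1) (a : Fin n) :
    coef k i (sw j (sw i a)) = coef k j a := by
  rw [coef_eq, coef_eq, sw_val, sw_val]
  congr 1
  apply propext
  split_ifs <;> omega

theorem braid (hD : ∀ i : Idx n, IsOddDD k n i.lo i.hi (s i) (D i)) {i j : Idx n}
    (h : j.lo.val = i.lo.val + 1) : D i * (D j * D i) = D j * (D i * D j) := by
  refine end_ext (by simp [apply_one hD]) fun a g hg => ?_
  have hs : sw i (sw j (sw i a)) = sw j (sw i (sw j a)) := congrArg (fun e => e a) (sw_braid h)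
  have hi : D i (D i g) = 0 := congrArg (fun e => e g) (sq_zero hD i)
  have hj : D j (D j g) = 0 := congrArg (fun e => e g) (sq_zero hD j)
  change D i (D j (D i g)) = D j (D i (D j g)) at hg
  change D i (D j (D i (SPol.X k n a * g))) = D j (D i (D j (SPol.X k n a * g)))
  simp only [apply_X_mul hD, map_sub, map_smul, coef_braid (Or.inl h), coef_braid (Or.inr h),
    hi, hj, hs, hg, smul_zero]
  abel

/-- The sign rules for composition in `End(SPol_n)`; together with the monoid-with-zero structure
they are all that is needed to treat products along words up to sign. -/
instance : HasDistribNeg (Module.End k (SPol k n)) where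
  neg_neg f := LinearMap.ext fun x => neg_neg (f x)
  neg_mul _ _ := rfl
  mul_neg f g := LinearMap.ext fun x => map_neg f (g x)

end Relations

/-! ### Inversions and reduced words in the symmetric group -/

section Length

variable {n : ℕ}

/-- The inversions of `w`: pairs of positions `p < q` with `w p > w q`. -/
def invSet (w : Equiv.Perm (Fin n)) : Finset (Fin n × Fin n) :=
  Finset.univ.filter fun x => x.1 < x.2 ∧ w x.2 < w x.1

/-- The number of inversions of `w`. -/
def inv (w : Equiv.Perm (Fin n)) : ℕ := (invSet w).card

theorem inv_one : inv (1 : Equiv.Perm (Fin n)) = 0 := by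
  rw [inv, Finset.card_eq_zero, invSet, Finset.filter_eq_empty_iff]
  rintro x - ⟨h1, h2⟩
  exact absurd h1 (not_lt.2 h2.le)

/-- The order of two values is affected by `s_i` only if they are `i` and `i+1`. -/
theorem sw_lt_sw (i : Idx n) (a b : Fin n) :
    sw i b < sw i a ↔ (b < a ∧ ¬ (a = i.hi ∧ b = i.lo)) ∨ (a = i.lo ∧ b = i.hi) := by
  simp only [Fin.lt_def, sw_val, Fin.ext_iff, hi_val]
  split_ifs <;> omega

theorem inv_sw_mul_of_lt (i : Idx n) (w : Equiv.Perm (Fin n)) (h : w⁻¹ i.lo < w⁻¹ i.hi) :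
    inv (sw i * w) = inv w + 1 := by
  have hlt : i.lo < i.hi := by simp [Idx.lo, Idx.hi, Fin.lt_def]
  have hs : invSet (sw i * w) = insert (w⁻¹ i.lo, w⁻¹ i.hi) (invSet w) := by
    ext ⟨p, q⟩
    simp only [invSet, Finset.mem_filter, Finset.mem_univ, true_and, Finset.mem_insert,
      Equiv.Perm.mul_apply, sw_lt_sw, Prod.mk.injEq, Equiv.Perm.eq_inv_iff_eq]
    constructor
    · rintro ⟨h1, ⟨h2, -⟩ | h2⟩
      · exact Or.inr ⟨h1, h2⟩
      · exact Or.inl h2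
    · rintro (⟨h1, h2⟩ | ⟨h1, h2⟩)
      · refine ⟨?_, Or.inr ⟨h1, h2⟩⟩
        rw [← h1, ← h2] at h
        simpa using h
      · refine ⟨h1, Or.inl ⟨h2, ?_⟩⟩
        rintro ⟨h3, h4⟩
        rw [← h3, ← h4] at h
        rw [Equiv.Perm.inv_eq_iff_eq.2 rfl, Equiv.Perm.inv_eq_iff_eq.2 rfl] at h
        exact absurd h1 (not_lt.2 h.le)
  rw [inv, hs, Finset.card_insert_of_notMem, inv]
  simp [invSet, hlt.le]

theorem sw_mul_sw_mul (i : Idx n) (w : Equiv.Perm (Fin n)) : sw i * (sw i * w) = w := by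
  rw [← mul_assoc, sw, Equiv.swap_mul_self, one_mul]

theorem inv_sw_mul (i : Idx n) (w : Equiv.Perm (Fin n)) (a : Fin n) :
    (sw i * w)⁻¹ a = w⁻¹ (sw i a) := by
  rw [mul_inv_rev, Equiv.Perm.mul_apply, sw, Equiv.swap_inv]

/-- `i` is a left descent of `w`. -/
def IsDescent (i : Idx n) (w : Equiv.Perm (Fin n)) : Prop := w⁻¹ i.hi < w⁻¹ i.lo

theorem inv_of_descent {i : Idx n} {w : Equiv.Perm (Fin n)} (h : IsDescent i w) :
    inv w = inv (sw i * w) + 1 := by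
  conv_lhs => rw [← sw_mul_sw_mul i w]
  apply inv_sw_mul_of_lt
  rw [inv_sw_mul, inv_sw_mul, sw, Equiv.swap_apply_left, Equiv.swap_apply_right]
  exact h

theorem inv_of_not_descent {i : Idx n} {w : Equiv.Perm (Fin n)} (h : ¬ IsDescent i w) :
    inv (sw i * w) = inv w + 1 := by
  apply inv_sw_mul_of_lt
  refine lt_of_le_of_ne (not_lt.1 h) fun he => lo_ne_hi i (w⁻¹.injective he)

theorem inv_sw_mul_le (i : Idx n) (w : Equiv.Perm (Fin n)) : inv (sw i * w) ≤ inv w + 1 := by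
  by_cases h : IsDescent i w
  · have := inv_of_descent h
    omega
  · exact (inv_of_not_descent h).le

/-- Without left descents, `w⁻¹` is increasing, hence the identity. -/
theorem exists_descent {w : Equiv.Perm (Fin n)} (hw : w ≠ 1) : ∃ i, IsDescent i w := by
  by_contra! hcon
  apply hw
  have hmono : StrictMono (w⁻¹ : Equiv.Perm (Fin n)) := by
    cases n with
    | zero => exact fun a => a.elim0
    | succ m =>
      rw [Fin.strictMono_iff_lt_succ]
      intro a
      have h := hcon ⟨a.1, Nat.succ_lt_succ a.2⟩
      refine lt_of_le_of_ne (not_lt.1 h) fun he => ?_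
      exact absurd (w⁻¹.injective he) (Fin.castSucc_lt_succ).ne
  have h1 : ∀ a, w⁻¹ a = a := fun a => by
    have := Subsingleton.elim (hmono.orderIsoOfSurjective _ w⁻¹.surjective) (OrderIso.refl _)
    exact congrArg (fun e => e a) this
  rw [← inv_eq_one]
  exact Equiv.ext h1

theorem permOfWord_cons (i : Idx n) (l : List (Idx n)) :
    permOfWord n (i :: l) = sw i * permOfWord n l := by
  simp [permOfWord, sw]

theorem inv_le_length (l : List (Idx n)) : inv (permOfWord n l) ≤ l.length := by
  induction l with
  | nil => simp [permOfWord, inv_one]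
  | cons i l ih =>
    rw [permOfWord_cons, List.length_cons]
    exact (inv_sw_mul_le _ _).trans (Nat.succ_le_succ ih)

theorem exists_word (w : Equiv.Perm (Fin n)) :
    ∃ l, permOfWord n l = w ∧ l.length = inv w := by
  induction hm : inv w generalizing w with
  | zero =>
    refine ⟨[], ?_, rfl⟩
    by_contra hw
    obtain ⟨i, hi⟩ := exists_descent (w := w) (fun h => hw (by simp [h, permOfWord]))
    have := inv_of_descent hi
    omega
  | succ m ih =>
    have hw : w ≠ 1 := by
      rintro rfl
      simp [inv_one] at hm
    obtain ⟨i, hi⟩ := exists_descent hw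
    obtain ⟨l, hl, hlen⟩ := ih (sw i * w) (by have := inv_of_descent hi; omega)
    exact ⟨i :: l, by rw [permOfWord_cons, hl, sw_mul_sw_mul], by simp [hlen]⟩

/-- Minimality among words for `w` amounts to having as many letters as `w` has inversions. -/
theorem isReducedWord_iff (l : List (Idx n)) :
    IsReducedWord n l ↔ l.length = inv (permOfWord n l) := by
  constructor
  · intro h
    obtain ⟨l', h1, h2⟩ := exists_word (permOfWord n l)
    exact le_antisymm (h2 ▸ h l' h1) (inv_le_length l)
  · intro h l' hl'
    rw [h, ← hl']
    exact inv_le_length l'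

/-- The tail of a reduced word is reduced, and its first letter is a left descent. -/
theorem reduced_cons {i : Idx n} {l : List (Idx n)}
    (h : (i :: l).length = inv (permOfWord n (i :: l))) :
    l.length = inv (permOfWord n l) ∧ IsDescent i (permOfWord n (i :: l)) := by
  have h1 := inv_le_length l
  rw [List.length_cons] at h
  constructor
  · have h2 := inv_sw_mul_le i (permOfWord n l)
    rw [permOfWord_cons] at h
    omega
  · by_contra hd
    have h2 := inv_of_not_descent hd
    rw [permOfWord_cons, sw_mul_sw_mul, ← permOfWord_cons] at h2
    omega

end Length

/-! ### Products along words, up to sign -/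

section Matsumoto

variable {n : ℕ} {R : Type*} [MonoidWithZero R] [HasDistribNeg R]

/-- Equality up to sign. -/
def PM (x y : R) : Prop := x = y ∨ x = -y

theorem PM.symm {x y : R} (h : PM x y) : PM y x := by
  rcases h with rfl | rfl
  · exact Or.inl rfl
  · exact Or.inr (neg_neg y).symm

theorem PM.trans {x y z : R} (h : PM x y) (h' : PM y z) : PM x z := by
  rcases h with rfl | rfl
  · exact h'
  · rcases h' with rfl | rfl
    · exact Or.inr rfl
    · exact Or.inl (neg_neg z)

theorem PM.mul_left (a : R) {x y : R} (h : PM x y) : PM (a * x) (a * y) := by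
  rcases h with rfl | rfl
  · exact Or.inl rfl
  · exact Or.inr (mul_neg a y)

variable {D : Idx n → R}

/-- For adjacent left descents `i`, `i+1` of `w` there are reduced words `i j i t` and `j i j t`
of `w`. -/
theorem exists_related_adj
    (hbraid : ∀ i j : Idx n, j.lo.val = i.lo.val + 1 → D i * (D j * D i) = D j * (D i * D j))
    {i j : Idx n} {w : Equiv.Perm (Fin n)} (hij : j.lo.val = i.lo.val + 1)
    (hi : IsDescent i w) (hj : IsDescent j w) :
    ∃ u v, permOfWord n (i :: u) = w ∧ permOfWord n (j :: v) = w ∧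
      (i :: u).length = inv w ∧ (j :: v).length = inv w ∧
      PM (((i :: u).map D).prod) (((j :: v).map D).prod) := by
  have e1 : j.lo = i.hi := Fin.ext hij
  have e2 : sw i j.hi = j.hi := by
    apply Equiv.swap_apply_of_ne_of_ne <;> simp only [ne_eq, Fin.ext_iff, hi_val] <;> omega
  have e3 : sw j i.lo = i.lo := by
    apply Equiv.swap_apply_of_ne_of_ne <;> simp only [ne_eq, Fin.ext_iff, hi_val] <;> omega
  have e4 : sw i i.hi = i.lo := Equiv.swap_apply_right _ _
  have e5 : sw i i.lo = i.hi := Equiv.swap_apply_left _ _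
  have e6 : sw j i.hi = j.hi := e1 ▸ Equiv.swap_apply_left _ _
  have d2 : IsDescent j (sw i * w) := by
    unfold IsDescent at *
    rw [e1] at hj ⊢
    rw [inv_sw_mul, inv_sw_mul, e2, e4]
    exact hj.trans hi
  have d3 : IsDescent i (sw j * (sw i * w)) := by
    unfold IsDescent at *
    rw [e1] at hj
    simp only [inv_sw_mul, e6, e3, e2, e5]
    exact hj
  have l1 := inv_of_descent hi
  have l2 := inv_of_descent d2
  have l3 := inv_of_descent d3
  obtain ⟨t, ht, hlen⟩ := exists_word (sw i * (sw j * (sw i * w)))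
  have hw : permOfWord n (i :: j :: i :: t) = w := by
    simp only [permOfWord_cons, ht, sw_mul_sw_mul]
  refine ⟨j :: i :: t, i :: j :: t, hw, ?_, ?_, ?_, Or.inl ?_⟩
  · rw [← hw]
    have := congrArg (· * permOfWord n t) (sw_braid hij)
    simpa only [permOfWord_cons, mul_assoc] using this.symm
  · simp only [List.length_cons]; omega
  · simp only [List.length_cons]; omega
  · have := congrArg (· * (t.map D).prod) (hbraid i j hij)
    simpa only [List.map_cons, List.prod_cons, mul_assoc] using this

/-- For distant left descents `i`, `j` of `w` there are reduced words `i j t` and `j i t` of `w`. -/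
theorem exists_related_far
    (hanti : ∀ i j : Idx n, (i.lo.val + 1 < j.lo.val ∨ j.lo.val + 1 < i.lo.val) →
      D i * D j = -(D j * D i))
    {i j : Idx n} {w : Equiv.Perm (Fin n)} (hij : i.lo.val + 1 < j.lo.val ∨ j.lo.val + 1 < i.lo.val)
    (hi : IsDescent i w) (hj : IsDescent j w) :
    ∃ u v, permOfWord n (i :: u) = w ∧ permOfWord n (j :: v) = w ∧
      (i :: u).length = inv w ∧ (j :: v).length = inv w ∧
      PM (((i :: u).map D).prod) (((j :: v).map D).prod) := by
  have e1 : sw i j.hi = j.hi := by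
    apply Equiv.swap_apply_of_ne_of_ne <;> simp only [ne_eq, Fin.ext_iff, hi_val] <;> omega
  have e2 : sw i j.lo = j.lo := by
    apply Equiv.swap_apply_of_ne_of_ne <;> simp only [ne_eq, Fin.ext_iff, hi_val] <;> omega
  have d2 : IsDescent j (sw i * w) := by
    unfold IsDescent
    rw [inv_sw_mul, inv_sw_mul, e1, e2]
    exact hj
  have l1 := inv_of_descent hi
  have l2 := inv_of_descent d2
  obtain ⟨t, ht, hlen⟩ := exists_word (sw j * (sw i * w))
  have hw : permOfWord n (i :: j :: t) = w := by
    simp only [permOfWord_cons, ht, sw_mul_sw_mul]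
  refine ⟨j :: t, i :: t, hw, ?_, ?_, ?_, Or.inr ?_⟩
  · rw [← hw]
    have := congrArg (· * permOfWord n t) (sw_comm hij)
    simpa only [permOfWord_cons, mul_assoc] using this.symm
  · simp only [List.length_cons]; omega
  · simp only [List.length_cons]; omega
  · have := congrArg (· * (t.map D).prod) (hanti i j hij)
    simpa only [List.map_cons, List.prod_cons, mul_assoc, neg_mul] using this

/-- Two distinct left descents of `w` start reduced words of `w` related by a single defining
relation, so the corresponding products agree up to sign. -/
theorem exists_related
    (hbraid : ∀ i j : Idx n, j.lo.val = i.lo.val + 1 → D i * (D j * D i) = D j * (D i * D j))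
    (hanti : ∀ i j : Idx n, (i.lo.val + 1 < j.lo.val ∨ j.lo.val + 1 < i.lo.val) →
      D i * D j = -(D j * D i))
    {i j : Idx n} {w : Equiv.Perm (Fin n)} (hij : i ≠ j)
    (hi : IsDescent i w) (hj : IsDescent j w) :
    ∃ u v, permOfWord n (i :: u) = w ∧ permOfWord n (j :: v) = w ∧
      (i :: u).length = inv w ∧ (j :: v).length = inv w ∧
      PM (((i :: u).map D).prod) (((j :: v).map D).prod) := by
  have hne : i.lo.val ≠ j.lo.val := fun h => hij (Subtype.ext h)
  by_cases h1 : j.lo.val = i.lo.val + 1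
  · exact exists_related_adj hbraid h1 hi hj
  by_cases h2 : i.lo.val = j.lo.val + 1
  · obtain ⟨u, v, a, b, c, d, e⟩ := exists_related_adj hbraid h2 hj hi
    exact ⟨v, u, b, a, d, c, e.symm⟩
  exact exists_related_far hanti (by omega) hi hj

/-- Matsumoto's theorem up to sign: the products along two reduced words of the same
permutation agree up to sign. -/
theorem prod_matsumoto
    (hbraid : ∀ i j : Idx n, j.lo.val = i.lo.val + 1 → D i * (D j * D i) = D j * (D i * D j))
    (hanti : ∀ i j : Idx n, (i.lo.val + 1 < j.lo.val ∨ j.lo.val + 1 < i.lo.val) →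
      D i * D j = -(D j * D i))
    (l₁ l₂ : List (Idx n)) (hp : permOfWord n l₁ = permOfWord n l₂)
    (h₁ : l₁.length = inv (permOfWord n l₁)) (h₂ : l₂.length = inv (permOfWord n l₂)) :
    PM ((l₁.map D).prod) ((l₂.map D).prod) := by
  induction hm : l₁.length generalizing l₁ l₂ with
  | zero =>
    have e1 := List.length_eq_zero_iff.1 hm
    have e2 := List.length_eq_zero_iff.1 (show l₂.length = 0 by rw [h₂, ← hp, ← h₁, hm])
    rw [e1, e2]
    exact Or.inl rfl
  | succ m ih =>
    -- Words with a common first letter are compared through their tails.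
    have same : ∀ (i : Idx n) (u v : List (Idx n)),
        permOfWord n (i :: u) = permOfWord n (i :: v) →
        (i :: u).length = inv (permOfWord n (i :: u)) →
        (i :: v).length = inv (permOfWord n (i :: v)) → (i :: u).length = m + 1 →
        PM (((i :: u).map D).prod) (((i :: v).map D).prod) := by
      intro i u v huv hu hv hlen
      rw [permOfWord_cons, permOfWord_cons] at huv
      simp only [List.map_cons, List.prod_cons]
      exact (ih u v (mul_left_cancel huv) (reduced_cons hu).1 (reduced_cons hv).1
        (by simpa using hlen)).mul_left _
    have hm2 : l₂.length = m + 1 := by rw [h₂, ← hp, ← h₁, hm]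
    obtain ⟨i, u, rfl⟩ := List.exists_cons_of_length_eq_add_one hm
    obtain ⟨j, v, rfl⟩ := List.exists_cons_of_length_eq_add_one hm2
    by_cases hij : i = j
    · subst hij
      exact same i u v hp h₁ h₂ hm
    · have dj := (reduced_cons h₂).2
      rw [← hp] at dj
      obtain ⟨u', v', a, b, c, d, e⟩ :=
        exists_related (D := D) hbraid hanti hij (reduced_cons h₁).2 dj
      refine ((same i u u' a.symm h₁ (a.symm ▸ c) hm).trans e).trans
        (same j v' v (b.trans hp) (b.symm ▸ d) h₂ ?_)
      rw [d, ← h₁, hm]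

/-- The product along a nonreduced word vanishes. -/
theorem prod_eq_zero (hsq : ∀ i, D i * D i = 0)
    (hbraid : ∀ i j : Idx n, j.lo.val = i.lo.val + 1 → D i * (D j * D i) = D j * (D i * D j))
    (hanti : ∀ i j : Idx n, (i.lo.val + 1 < j.lo.val ∨ j.lo.val + 1 < i.lo.val) →
      D i * D j = -(D j * D i))
    (l : List (Idx n)) (h : l.length ≠ inv (permOfWord n l)) : (l.map D).prod = 0 := by
  induction l with
  | nil => exact absurd (by simp [permOfWord, inv_one]) h
  | cons i u ih =>
    rw [List.map_cons, List.prod_cons]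
    by_cases hu : u.length = inv (permOfWord n u)
    · have hd : IsDescent i (permOfWord n u) := by
        by_contra hd
        apply h
        rw [permOfWord_cons, inv_of_not_descent hd, List.length_cons, hu]
      obtain ⟨t, ht, hlen⟩ := exists_word (sw i * permOfWord n u)
      have hp : permOfWord n u = permOfWord n (i :: t) := by
        rw [permOfWord_cons, ht, sw_mul_sw_mul]
      have hr : (i :: t).length = inv (permOfWord n (i :: t)) := by
        rw [← hp, inv_of_descent hd, List.length_cons, hlen]
      have hz : D i * ((i :: t).map D).prod = 0 := by
        rw [List.map_cons, List.prod_cons, ← mul_assoc, hsq, zero_mul]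
      rcases prod_matsumoto hbraid hanti u (i :: t) hp hu hr with e | e
      · rw [e, hz]
      · rw [e, mul_neg, hz, neg_zero]
    · rw [ih hu, mul_zero]

end Matsumoto

end OddDD

/-- fix for each `w ∈ S_n` a reduced expression `red w`, and let
`∂_w = ∂_{i_1} ⋯ ∂_{i_r}` be the corresponding product of odd divided difference
operators.  Then: (a) `∂_w` is independent of the choice of reduced expression up to
sign; (b) if `ℓ(w) + ℓ(w') = ℓ(ww')` then `∂_w ∂_{w'} = ±∂_{ww'}`; and (c) if
`ℓ(w) + ℓ(w') > ℓ(ww')` then `∂_w ∂_{w'} = 0`. -/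
theorem odd_dd_reduced_word_products (k : Type*) [CommRing k] (n : ℕ)
    (s : Idx n → (SPol k n →ₐ[k] SPol k n))
    (D : Idx n → Module.End k (SPol k n))
    (hD : ∀ i : Idx n, IsOddDD k n i.lo i.hi (s i) (D i))
    (red : Equiv.Perm (Fin n) → List (Idx n))
    (hred : ∀ w, permOfWord n (red w) = w ∧ IsReducedWord n (red w)) :
    (∀ l₁ l₂ : List (Idx n), permOfWord n l₁ = permOfWord n l₂ →
        IsReducedWord n l₁ → IsReducedWord n l₂ →
        (l₁.map D).prod = (l₂.map D).prod ∨ (l₁.map D).prod = -(l₂.map D).prod) ∧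
    (∀ w w' : Equiv.Perm (Fin n),
        (red w).length + (red w').length = (red (w * w')).length →
        ((red w).map D).prod * ((red w').map D).prod = ((red (w * w')).map D).prod ∨
        ((red w).map D).prod * ((red w').map D).prod = -((red (w * w')).map D).prod) ∧
    (∀ w w' : Equiv.Perm (Fin n),
        (red (w * w')).length < (red w).length + (red w').length →
        ((red w).map D).prod * ((red w').map D).prod = 0) := by
  have hsq := OddDD.sq_zero hD
  have hbraid : ∀ i j : Idx n, j.lo.val = i.lo.val + 1 → D i * (D j * D i) = D j * (D i * D j) :=
    fun _ _ h => OddDD.braid hD h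
  have hanti : ∀ i j : Idx n, (i.lo.val + 1 < j.lo.val ∨ j.lo.val + 1 < i.lo.val) →
      D i * D j = -(D j * D i) :=
    fun _ _ h => OddDD.anticomm hD h
  have hlen : ∀ w, (red w).length = OddDD.inv w := fun w => by
    rw [(OddDD.isReducedWord_iff _).1 (hred w).2, (hred w).1]
  have happ : ∀ w w', permOfWord n (red w ++ red w') = w * w' := fun w w' => by
    conv_rhs => rw [← (hred w).1, ← (hred w').1]
    simp [permOfWord]
  refine ⟨fun l₁ l₂ hp h₁ h₂ => ?_, fun w w' h => ?_, fun w w' h => ?_⟩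
  · exact OddDD.prod_matsumoto hbraid hanti l₁ l₂ hp ((OddDD.isReducedWord_iff _).1 h₁)
      ((OddDD.isReducedWord_iff _).1 h₂)
  · rw [← List.prod_append, ← List.map_append]
    refine OddDD.prod_matsumoto hbraid hanti _ _ ((happ w w').trans (hred _).1.symm) ?_
      ((OddDD.isReducedWord_iff _).1 (hred _).2)
    rw [happ, List.length_append, h, hlen]
  · rw [← List.prod_append, ← List.map_append]
    refine OddDD.prod_eq_zero hsq hbraid hanti _ ?_
    rw [happ, List.length_append, ← hlen]
    exact h.ne'
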